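/- arXiv:2111.05496 — 3 statements merged into one kernel-verified Lean document; each statement's English description precedes it below -/
import Mathlib

section
/- Suppose Assumption 2 (ℓ differentiable and convex in its first argument), Assumption 3 (M ≥ N_o), and Assumption 4 (the linear map (c_0,…,c_{L−1}) ↦ Σ_{i=0}^{L−1} W_i c_i is injective) hold. Then every local minimizer (W_L*, W_{L+1}*) of the fixed-feature ResNEst empirical risk R attains the empirical risk lower bound: R(W_L*, W_{L+1}*) equals the infimum of the A-ResNEst empirical risk A(H_0,…,H_L) over all (H_0,…,H_L) ∈ ℝ^{N_o×K_0} × ⋯ × ℝ^{N_o×K_L}. In particular every local minimizer of R is a global minimizer of R. -/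
/-!
STATEMENT 5: Under Assumptions 2, 3 and 4, every local minimizer of the fixed-feature
ResNEst risk `R` attains the empirical risk lower bound: its risk is the infimum of the
A-ResNEst risk `A` over all prediction weights `(H_0, …, H_L)`; in particular, every
local minimizer of `R` is a global minimizer of `R`.
-/

attribute [local instance] Matrix.normedAddCommGroup Matrix.normedSpace

/-!
Regard the risk as a convex function `F` of the joint prediction on all samples, and let `F'` be its
Gateaux derivative at the prediction of a local minimizer `(P, Q)` of `F (n ↦ Q (u n + P (v n)))`.
Stationarity in `Q` says that `F'` kills `n ↦ D (u n + P (v n))` for every matrix `D`. The crux is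
that `F'` also kills `n ↦ E (v n)` for every `E`. If `Q` is injective, it is invertible for
dimension reasons, and this is stationarity in `P`. Otherwise pick `x ≠ 0` with `Q x = 0`: moving
`P` a little along `x aᵀ` does not change the prediction, so it leads to further local minimizers,
and comparing stationarity in `Q` there and at `(P, Q)` shows that `F'` kills `n ↦ D (x aᵀ) (v n)`;
the matrices `D (x aᵀ)` span. Hence `F'` kills every `n ↦ D (u n) + E (v n)`, and by convexity the
prediction of `(P, Q)` minimizes `F` among these. Injectivity of `c ↦ ∑ i, W i (c i)` writes every
A-ResNEst prediction in this form.
-/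

open Filter Topology Matrix

theorem tendsto_add_smul_nhds_zero {X : Type*} [TopologicalSpace X] [AddCommGroup X] [Module ℝ X]
    [ContinuousAdd X] [ContinuousSMul ℝ X] (a d : X) :
    Tendsto (fun t : ℝ => a + t • d) (𝓝 0) (𝓝 a) :=
  Continuous.tendsto' (by fun_prop) _ _ (by simp)

theorem eventually_isLocalMin_of_eq {X : Type*} [TopologicalSpace X] {f : X → ℝ} {a : X}
    (h : IsLocalMin f a) : ∀ᶠ b in 𝓝 a, f b = f a → IsLocalMin f b := by
  filter_upwards [Eventually.eventually_nhds h] with b hb hba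
  simpa only [IsLocalMin, IsMinFilter, hba] using hb

section GateauxDerivative

variable {E : Type*} [AddCommGroup E] [Module ℝ E] {f : E → ℝ} {f' : E →ₗ[ℝ] ℝ} {s : Set E}
  {x y w : E}

/-- The linear functional `f'` is the Gateaux derivative of `f` at `x`: it gives the derivative of
`f` along every line through `x`. It expresses the first-order conditions at a local minimizer; no
continuity of `f'` is asked for, so `E` needs no topology. -/
def HasGateauxDerivAt (f : E → ℝ) (f' : E →ₗ[ℝ] ℝ) (x : E) : Prop :=
  ∀ w, HasLineDerivAt ℝ f (f' w) x w

theorem HasGateauxDerivAt.apply_eq_zero_of_eventually_le (hf : HasGateauxDerivAt f f' x)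
    (h : ∀ᶠ t : ℝ in 𝓝 0, f x ≤ f (x + t • w)) : f' w = 0 := by
  have hmin : IsLocalMin (fun t : ℝ => f (x + t • w)) 0 := by
    simpa [IsLocalMin, IsMinFilter] using h
  exact hmin.hasDerivAt_eq_zero (hf w)

theorem HasGateauxDerivAt.add_apply_sub_le_of_convexOn (hf : HasGateauxDerivAt f f' x)
    (hconv : ConvexOn ℝ s f) (hx : x ∈ s) (hy : y ∈ s) : f x + f' (y - x) ≤ f y := by
  have hline : ConvexOn ℝ (AffineMap.lineMap x y ⁻¹' s) (f ∘ AffineMap.lineMap (k := ℝ) x y) :=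
    hconv.comp_affineMap _
  have hderiv : HasDerivAt (f ∘ AffineMap.lineMap (k := ℝ) x y) (f' (y - x)) 0 := by
    simpa [HasLineDerivAt, Function.comp_def, AffineMap.lineMap_apply_module', add_comm, -map_sub]
      using hf (y - x)
  have hslope := hline.le_slope_of_hasDerivAt (x := 0) (y := 1) (by simpa) (by simpa) one_pos hderiv
  simp only [slope_def_field, Function.comp_apply, AffineMap.lineMap_apply_one,
    AffineMap.lineMap_apply_zero, sub_zero, div_one] at hslope
  linarith

end GateauxDerivative

theorem hasGateauxDerivAt_fderiv {E : Type*} [NormedAddCommGroup E] [NormedSpace ℝ E] {f : E → ℝ}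
    {x : E} (hf : DifferentiableAt ℝ f x) : HasGateauxDerivAt f (fderiv ℝ f x).toLinearMap x :=
  hf.hasFDerivAt.hasLineDerivAt

section MatrixAlgebra

variable {𝕜 m o : Type*} [Field 𝕜] [Fintype m]

theorem exists_mulVec_eq_of_ne_zero {x : m → 𝕜} (hx : x ≠ 0) (b : o → 𝕜) :
    ∃ D : Matrix o m 𝕜, D *ᵥ x = b := by
  classical
  obtain ⟨j, hj⟩ := Function.ne_iff.1 hx
  refine ⟨vecMulVec b (Pi.single j (x j)⁻¹), ?_⟩
  simp [vecMulVec_mulVec, inv_mul_cancel₀ hj]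

theorem exists_mul_eq_one_of_injective_mulVec [Fintype o] [DecidableEq o] {Q : Matrix o m 𝕜}
    (hQ : Function.Injective Q.mulVec) (hcard : Fintype.card o ≤ Fintype.card m) :
    ∃ B : Matrix m o 𝕜, Q * B = 1 := by
  have hle : Fintype.card m ≤ Fintype.card o := by
    simpa using LinearMap.finrank_le_finrank_of_injective (f := Q.mulVecLin) hQ
  have hrank : Module.finrank 𝕜 (m → 𝕜) = Module.finrank 𝕜 (o → 𝕜) := by
    simpa using le_antisymm hle hcard
  exact mulVec_surjective_iff_exists_right_inverse.1
    ((LinearMap.injective_iff_surjective_of_finrank_eq_finrank (f := Q.mulVecLin) hrank).1 hQ)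

theorem exists_mulVec_sum_mulVec_eq_sum_mulVec {κ : Type*} [Fintype κ] {k : κ → Type*}
    [∀ i, Fintype (k i)] (W : (i : κ) → Matrix m (k i) 𝕜)
    (hW : Function.Injective fun c : (i : κ) → k i → 𝕜 => ∑ i, W i *ᵥ c i)
    (H : (i : κ) → Matrix o (k i) 𝕜) :
    ∃ D : Matrix o m 𝕜, ∀ c : (i : κ) → k i → 𝕜, D *ᵥ ∑ i, W i *ᵥ c i = ∑ i, H i *ᵥ c i := by
  classical
  let T : ((i : κ) → k i → 𝕜) →ₗ[𝕜] m → 𝕜 := ∑ i, (W i).mulVecLin ∘ₗ LinearMap.proj i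
  let G : ((i : κ) → k i → 𝕜) →ₗ[𝕜] o → 𝕜 := ∑ i, (H i).mulVecLin ∘ₗ LinearMap.proj i
  have hT (c) : T c = ∑ i, W i *ᵥ c i := by simp [T]
  obtain ⟨S, hS⟩ := T.exists_leftInverse_of_injective <| LinearMap.ker_eq_bot.2 <| by
    rwa [← funext hT] at hW
  refine ⟨LinearMap.toMatrix' (G ∘ₗ S), fun c => ?_⟩
  have hSc : S (T c) = c := LinearMap.congr_fun hS c
  rw [LinearMap.toMatrix'_mulVec, LinearMap.comp_apply, ← hT, hSc]
  simp [G]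

end MatrixAlgebra

section Predictions

variable {ι m o k : Type*} [Fintype m] [Fintype k]

/-- The joint prediction `n ↦ D (x n)` of the linear model with weights `D` on the feature vectors
`x n`. It is bundled as a bilinear map so that stationarity conditions are linear in `D` and
in `x`. -/
def linearPrediction : (ι → m → ℝ) →ₗ[ℝ] Matrix o m ℝ →ₗ[ℝ] ι → o → ℝ :=
  LinearMap.mk₂ ℝ (fun x D n => D *ᵥ x n)
    (fun _ _ _ => funext fun _ => mulVec_add _ _ _)
    (fun c x D => funext fun n => mulVec_smul D c (x n))
    (fun _ _ _ => funext fun _ => add_mulVec _ _ _)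
    (fun _ _ _ => funext fun _ => smul_mulVec _ _ _)

@[simp]
theorem linearPrediction_apply (x : ι → m → ℝ) (D : Matrix o m ℝ) (n : ι) :
    linearPrediction x D n = D *ᵥ x n := rfl

theorem linearPrediction_linearPrediction (v : ι → k → ℝ) (C : Matrix m k ℝ) (D : Matrix o m ℝ) :
    linearPrediction (linearPrediction v C) D = linearPrediction v (D * C) := by
  ext n
  simp [mulVec_mulVec]

/-- The joint prediction of a fixed-feature ResNEst with weights `p = (W_L, W_{L+1})`: `u n` is the
contribution of the earlier blocks to the residual representation of sample `n`, and `v n` is the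
last feature vector. -/
def resnestPrediction (u : ι → m → ℝ) (v : ι → k → ℝ) (p : Matrix m k ℝ × Matrix o m ℝ) :
    ι → o → ℝ :=
  linearPrediction (u + linearPrediction v p.1) p.2

theorem resnestPrediction_add_fst (u : ι → m → ℝ) (v : ι → k → ℝ) (P C : Matrix m k ℝ)
    (Q : Matrix o m ℝ) :
    resnestPrediction u v (P + C, Q) =
      resnestPrediction u v (P, Q) + linearPrediction v (Q * C) := by
  simp only [resnestPrediction, map_add, LinearMap.add_apply, linearPrediction_linearPrediction,
    add_assoc]

theorem resnestPrediction_add_snd (u : ι → m → ℝ) (v : ι → k → ℝ) (P : Matrix m k ℝ)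
    (Q D : Matrix o m ℝ) :
    resnestPrediction u v (P, Q + D) =
      resnestPrediction u v (P, Q) + linearPrediction (u + linearPrediction v P) D :=
  map_add _ _ _

theorem resnestPrediction_eq_add (u : ι → m → ℝ) (v : ι → k → ℝ) (P : Matrix m k ℝ)
    (Q : Matrix o m ℝ) :
    resnestPrediction u v (P, Q) = linearPrediction u Q + linearPrediction v (Q * P) := by
  simp only [resnestPrediction, map_add, LinearMap.add_apply, linearPrediction_linearPrediction]

end Predictions

section Stationarity

variable {ι m o k : Type*} [Fintype m] [Fintype k] {F : (ι → o → ℝ) → ℝ}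
  {F' : (ι → o → ℝ) →ₗ[ℝ] ℝ} {u : ι → m → ℝ} {v : ι → k → ℝ} {P : Matrix m k ℝ} {Q : Matrix o m ℝ}

theorem HasGateauxDerivAt.apply_linearPrediction_mul_eq_zero
    (hF : HasGateauxDerivAt F F' (resnestPrediction u v (P, Q)))
    (hmin : IsLocalMin (F ∘ resnestPrediction u v) (P, Q)) (C : Matrix m k ℝ) :
    F' (linearPrediction v (Q * C)) = 0 := by
  refine hF.apply_eq_zero_of_eventually_le ?_
  have hcurve : Tendsto (fun t : ℝ => (P + t • C, Q)) (𝓝 0) (𝓝 (P, Q)) :=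
    (tendsto_add_smul_nhds_zero P C).prodMk_nhds tendsto_const_nhds
  filter_upwards [hcurve.eventually hmin] with t ht
  simpa [resnestPrediction_add_fst] using ht

theorem HasGateauxDerivAt.apply_linearPrediction_residual_eq_zero
    (hF : HasGateauxDerivAt F F' (resnestPrediction u v (P, Q)))
    (hmin : IsLocalMin (F ∘ resnestPrediction u v) (P, Q)) (D : Matrix o m ℝ) :
    F' (linearPrediction (u + linearPrediction v P) D) = 0 := by
  refine hF.apply_eq_zero_of_eventually_le ?_
  have hcurve : Tendsto (fun t : ℝ => (P, Q + t • D)) (𝓝 0) (𝓝 (P, Q)) :=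
    tendsto_const_nhds.prodMk_nhds (tendsto_add_smul_nhds_zero Q D)
  filter_upwards [hcurve.eventually hmin] with t ht
  simpa [resnestPrediction_add_snd] using ht

theorem HasGateauxDerivAt.apply_linearPrediction_mul_eq_zero_of_mul_eq_zero
    (hF : HasGateauxDerivAt F F' (resnestPrediction u v (P, Q)))
    (hmin : IsLocalMin (F ∘ resnestPrediction u v) (P, Q)) {C : Matrix m k ℝ} (hQC : Q * C = 0)
    (D : Matrix o m ℝ) :
    F' (linearPrediction v (D * C)) = 0 := by
  have hpred (t : ℝ) : resnestPrediction u v (P + t • C, Q) = resnestPrediction u v (P, Q) := by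
    simp [resnestPrediction_add_fst, hQC]
  have hcurve : Tendsto (fun t : ℝ => (P + t • C, Q)) (𝓝 0) (𝓝 (P, Q)) :=
    (tendsto_add_smul_nhds_zero P C).prodMk_nhds tendsto_const_nhds
  have hnear : ∀ᶠ t : ℝ in 𝓝 0, IsLocalMin (F ∘ resnestPrediction u v) (P + t • C, Q) := by
    filter_upwards [hcurve.eventually (eventually_isLocalMin_of_eq hmin)] with t ht
    exact ht (congrArg F (hpred t))
  obtain ⟨t, ht, ht0⟩ : ∃ t : ℝ, IsLocalMin (F ∘ resnestPrediction u v) (P + t • C, Q) ∧ t ≠ 0 :=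
    ((hnear.filter_mono nhdsWithin_le_nhds).and (eventually_mem_nhdsWithin (s := {0}ᶜ))).exists
  have hF' : HasGateauxDerivAt F F' (resnestPrediction u v (P + t • C, Q)) := by rwa [hpred]
  have hsplit : linearPrediction (u + linearPrediction v (P + t • C)) D =
      linearPrediction (u + linearPrediction v P) D + t • linearPrediction v (D * C) := by
    rw [← linearPrediction_linearPrediction, map_add (linearPrediction v), map_smul, ← add_assoc,
      map_add, map_smul, LinearMap.add_apply, LinearMap.smul_apply]
  have hshift : t • F' (linearPrediction v (D * C)) = 0 := by
    rw [← hF'.apply_linearPrediction_residual_eq_zero ht D, hsplit, map_add, map_smul,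
      hF.apply_linearPrediction_residual_eq_zero hmin, zero_add]
  exact (smul_eq_zero.1 hshift).resolve_left ht0

theorem HasGateauxDerivAt.apply_linearPrediction_eq_zero_of_not_injective [Finite o]
    (hF : HasGateauxDerivAt F F' (resnestPrediction u v (P, Q)))
    (hmin : IsLocalMin (F ∘ resnestPrediction u v) (P, Q)) (hQ : ¬ Function.Injective Q.mulVec)
    (E : Matrix o k ℝ) :
    F' (linearPrediction v E) = 0 := by
  classical
  obtain ⟨x, hQx, hx⟩ : ∃ x, Q *ᵥ x = 0 ∧ x ≠ 0 := by
    simpa using mt (injective_iff_map_eq_zero Q.mulVecLin).2 hQ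
  suffices h : F' ∘ₗ linearPrediction v = 0 from LinearMap.congr_fun h E
  refine ext_linearMap ℝ fun i j => LinearMap.ext_ring ?_
  obtain ⟨D, hD⟩ := exists_mulVec_eq_of_ne_zero hx (Pi.single i 1)
  have hsingle : D * vecMulVec x (Pi.single j 1) = single i j 1 := by
    rw [mul_vecMulVec, hD, single_eq_single_vecMulVec_single]
  have hkernel : Q * vecMulVec x (Pi.single j 1) = 0 := by
    rw [mul_vecMulVec, hQx, zero_vecMulVec]
  simpa [hsingle] using hF.apply_linearPrediction_mul_eq_zero_of_mul_eq_zero hmin hkernel D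

theorem HasGateauxDerivAt.apply_linearPrediction_eq_zero [Fintype o]
    (hF : HasGateauxDerivAt F F' (resnestPrediction u v (P, Q)))
    (hcard : Fintype.card o ≤ Fintype.card m)
    (hmin : IsLocalMin (F ∘ resnestPrediction u v) (P, Q)) (E : Matrix o k ℝ) :
    F' (linearPrediction v E) = 0 := by
  classical
  by_cases hQ : Function.Injective Q.mulVec
  · obtain ⟨B, hB⟩ := exists_mul_eq_one_of_injective_mulVec hQ hcard
    simpa [← Matrix.mul_assoc, hB] using hF.apply_linearPrediction_mul_eq_zero hmin (B * E)
  · exact hF.apply_linearPrediction_eq_zero_of_not_injective hmin hQ E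

theorem HasGateauxDerivAt.apply_linearPrediction_add_eq_zero [Fintype o]
    (hF : HasGateauxDerivAt F F' (resnestPrediction u v (P, Q)))
    (hcard : Fintype.card o ≤ Fintype.card m)
    (hmin : IsLocalMin (F ∘ resnestPrediction u v) (P, Q)) (D : Matrix o m ℝ) (E : Matrix o k ℝ) :
    F' (linearPrediction u D + linearPrediction v E) = 0 := by
  have hres := hF.apply_linearPrediction_residual_eq_zero hmin D
  rw [map_add, LinearMap.add_apply, map_add, linearPrediction_linearPrediction,
    hF.apply_linearPrediction_eq_zero hcard hmin, add_zero] at hres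
  rw [map_add, hres, hF.apply_linearPrediction_eq_zero hcard hmin, add_zero]

theorem HasGateauxDerivAt.resnestPrediction_le [Fintype o]
    (hF : HasGateauxDerivAt F F' (resnestPrediction u v (P, Q)))
    (hcard : Fintype.card o ≤ Fintype.card m) (hconv : ConvexOn ℝ Set.univ F)
    (hmin : IsLocalMin (F ∘ resnestPrediction u v) (P, Q)) (D : Matrix o m ℝ) (E : Matrix o k ℝ) :
    F (resnestPrediction u v (P, Q)) ≤ F (linearPrediction u D + linearPrediction v E) := by
  have hlinear := hF.apply_linearPrediction_add_eq_zero hcard hmin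
  have hself : F' (resnestPrediction u v (P, Q)) = 0 :=
    resnestPrediction_eq_add u v P Q ▸ hlinear Q (Q * P)
  calc F (resnestPrediction u v (P, Q))
    _ = F (resnestPrediction u v (P, Q)) +
        F' (linearPrediction u D + linearPrediction v E - resnestPrediction u v (P, Q)) := by
      rw [map_sub, hlinear, hself, sub_zero, add_zero]
    _ ≤ F (linearPrediction u D + linearPrediction v E) :=
      hF.add_apply_sub_le_of_convexOn hconv (Set.mem_univ _) (Set.mem_univ _)

end Stationarity

section Blocks

variable {ι m o : Type*} [Fintype m] {L : ℕ} {K : Fin (L + 1) → Type*} [∀ i, Fintype (K i)]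

/-- The joint prediction of an A-ResNEst: the sum over all blocks `i` of the linear predictions with
weights `H i` on the features `v i`. -/
def aresnestPrediction (v : (i : Fin (L + 1)) → ι → K i → ℝ)
    (H : (i : Fin (L + 1)) → Matrix o (K i) ℝ) : ι → o → ℝ :=
  fun n => ∑ i, H i *ᵥ v i n

theorem resnestPrediction_mem_range_aresnestPrediction (W : (i : Fin L) → Matrix m (K i.castSucc) ℝ)
    (v : (i : Fin (L + 1)) → ι → K i → ℝ) {u : ι → m → ℝ}
    (hu : ∀ n, u n = ∑ i, W i *ᵥ v i.castSucc n)
    (p : Matrix m (K (Fin.last L)) ℝ × Matrix o m ℝ) :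
    resnestPrediction u (v (Fin.last L)) p ∈ Set.range (aresnestPrediction (o := o) v) := by
  refine ⟨Fin.snoc (fun i => p.2 * W i) (p.2 * p.1), funext fun n => ?_⟩
  simp [aresnestPrediction, resnestPrediction, Fin.sum_univ_castSucc, hu, mulVec_sum, mulVec_mulVec]

theorem exists_aresnestPrediction_eq_add (W : (i : Fin L) → Matrix m (K i.castSucc) ℝ)
    (hW : Function.Injective fun c : (i : Fin L) → K i.castSucc → ℝ => ∑ i, W i *ᵥ c i)
    (v : (i : Fin (L + 1)) → ι → K i → ℝ) {u : ι → m → ℝ}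
    (hu : ∀ n, u n = ∑ i, W i *ᵥ v i.castSucc n)
    (H : (i : Fin (L + 1)) → Matrix o (K i) ℝ) :
    ∃ D : Matrix o m ℝ, aresnestPrediction v H =
      linearPrediction u D + linearPrediction (v (Fin.last L)) (H (Fin.last L)) := by
  obtain ⟨D, hD⟩ := exists_mulVec_sum_mulVec_eq_sum_mulVec W hW fun i => H i.castSucc
  refine ⟨D, funext fun n => ?_⟩
  simp [aresnestPrediction, Fin.sum_univ_castSucc, hu, hD]

end Blocks

section EmpiricalRisk

variable {ι E : Type*} [Fintype ι] [NormedAddCommGroup E] [NormedSpace ℝ E] {f : ι → E → ℝ}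

/-- The average over the samples `n` of the losses `f n` of the predictions `z n`, as a function of
the joint prediction `z`; the targets are absorbed into `f`. -/
noncomputable def empiricalRisk (f : ι → E → ℝ) (z : ι → E) : ℝ :=
  (1 / (Fintype.card ι : ℝ)) * ∑ n, f n (z n)

theorem differentiable_empiricalRisk (hf : ∀ n, Differentiable ℝ (f n)) :
    Differentiable ℝ (empiricalRisk f) := by
  unfold empiricalRisk
  fun_prop

theorem convexOn_empiricalRisk (hf : ∀ n, ConvexOn ℝ Set.univ (f n)) :
    ConvexOn ℝ Set.univ (empiricalRisk f) := by
  refine ConvexOn.smul (by positivity) ?_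
  refine ⟨convex_univ, fun x _ y _ a b ha hb hab => ?_⟩
  simp only [Finset.smul_sum, ← Finset.sum_add_distrib]
  exact Finset.sum_le_sum fun n _ => (hf n).2 (Set.mem_univ _) (Set.mem_univ _) ha hb hab

end EmpiricalRisk

theorem resnest_local_min_attains_aresnest_lower_bound_general
    {ι m o : Type*} [Fintype m] [Fintype o] {L : ℕ} {K : Fin (L + 1) → Type*}
    [∀ i, Fintype (K i)] (W : (i : Fin L) → Matrix m (K i.castSucc) ℝ)
    (v : (i : Fin (L + 1)) → ι → K i → ℝ) {u : ι → m → ℝ}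
    (hu : ∀ n, u n = ∑ i, W i *ᵥ v i.castSucc n) (hcard : Fintype.card o ≤ Fintype.card m)
    (hW : Function.Injective fun c : (i : Fin L) → K i.castSucc → ℝ => ∑ i, W i *ᵥ c i)
    {F : (ι → o → ℝ) → ℝ} (hconv : ConvexOn ℝ Set.univ F)
    {p : Matrix m (K (Fin.last L)) ℝ × Matrix o m ℝ} {F' : (ι → o → ℝ) →ₗ[ℝ] ℝ}
    (hF : HasGateauxDerivAt F F' (resnestPrediction u (v (Fin.last L)) p))
    (hp : IsLocalMin (F ∘ resnestPrediction u (v (Fin.last L))) p) :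
    IsLeast (Set.range (F ∘ aresnestPrediction v)) (F (resnestPrediction u (v (Fin.last L)) p)) ∧
      ∀ q, F (resnestPrediction u (v (Fin.last L)) p) ≤
        F (resnestPrediction u (v (Fin.last L)) q) := by
  have hle (H : (i : Fin (L + 1)) → Matrix o (K i) ℝ) :
      F (resnestPrediction u (v (Fin.last L)) p) ≤ F (aresnestPrediction v H) := by
    obtain ⟨D, hD⟩ := exists_aresnestPrediction_eq_add W hW v hu H
    exact hD ▸ hF.resnestPrediction_le hcard hconv hp D _
  have hmem (q : Matrix m (K (Fin.last L)) ℝ × Matrix o m ℝ) :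
      ∃ H, aresnestPrediction v H = resnestPrediction u (v (Fin.last L)) q :=
    resnestPrediction_mem_range_aresnestPrediction W v hu q
  refine ⟨⟨(hmem p).imp fun H hH => congrArg F hH, Set.forall_mem_range.2 hle⟩, fun q => ?_⟩
  obtain ⟨H, hH⟩ := hmem q
  exact hH ▸ hle H

theorem resnest_local_min_attains_aresnest_lower_bound
    (N L M No : ℕ) (hN : 0 < N) (hL : 1 ≤ L) (hM : 0 < M) (hNo : 0 < No)
    (K : ℕ → ℕ)
    -- fixed matrices W_i ∈ ℝ^{M×K_i}, i = 0, …, L−1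
    (W : (i : ℕ) → Matrix (Fin M) (Fin (K i)) ℝ)
    -- feature vectors v_i^n ∈ ℝ^{K_i} and targets y^n ∈ ℝ^{N_o}
    (v : (i : ℕ) → Fin N → Fin (K i) → ℝ)
    (y : Fin N → Fin No → ℝ)
    -- u^n = Σ_{i=0}^{L−1} W_i v_i^n
    (u : Fin N → Fin M → ℝ)
    (hu : ∀ n, u n = ∑ i ∈ Finset.range L, (W i).mulVec (v i n))
    -- the loss function
    (ℓ : (Fin No → ℝ) → (Fin No → ℝ) → ℝ)
    -- Assumption 2: ℓ(yhat, y) is differentiable and convex in yhat for every y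
    (hdiff : ∀ yy, Differentiable ℝ (fun yhat => ℓ yhat yy))
    (hconv : ∀ yy, ConvexOn ℝ Set.univ (fun yhat => ℓ yhat yy))
    -- Assumption 3: M ≥ N_o
    (hMNo : M ≥ No)
    -- Assumption 4: (c_0, …, c_{L−1}) ↦ Σ_{i=0}^{L−1} W_i c_i is injective
    (hinj : Function.Injective
      (fun c : (i : Fin L) → Fin (K i.val) → ℝ => ∑ i : Fin L, (W i.val).mulVec (c i)))
    -- fixed-feature ResNEst empirical risk
    (R : Matrix (Fin M) (Fin (K L)) ℝ × Matrix (Fin No) (Fin M) ℝ → ℝ)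
    (hR : ∀ p, R p =
      (1 / (N : ℝ)) * ∑ n, ℓ (p.2.mulVec (u n + p.1.mulVec (v L n))) (y n))
    -- A-ResNEst empirical risk
    (A : ((i : Fin (L + 1)) → Matrix (Fin No) (Fin (K i.val)) ℝ) → ℝ)
    (hA : ∀ H, A H =
      (1 / (N : ℝ)) * ∑ n, ℓ (∑ i : Fin (L + 1), (H i).mulVec (v i.val n)) (y n))
    -- a local minimizer of R
    (p : Matrix (Fin M) (Fin (K L)) ℝ × Matrix (Fin No) (Fin M) ℝ)
    (hp : IsLocalMin R p) :
    IsGLB (Set.range A) (R p) ∧ ∀ q, R p ≤ R q := by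
  obtain rfl : R = empiricalRisk (fun n yhat => ℓ yhat (y n)) ∘ resnestPrediction u (v L) :=
    funext fun q => by simp [hR, empiricalRisk, resnestPrediction, -map_add]
  obtain rfl : A = empiricalRisk (fun n yhat => ℓ yhat (y n)) ∘
      aresnestPrediction fun i : Fin (L + 1) => v i :=
    funext fun H => by simp [hA, empiricalRisk, aresnestPrediction]
  have hu' (n : Fin N) : u n = ∑ i : Fin L, W i *ᵥ v i n := (hu n).trans (Finset.sum_range _)
  have hderiv := hasGateauxDerivAt_fderiv
    (differentiable_empiricalRisk (fun n => hdiff (y n)) (resnestPrediction u (v L) p))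
  exact (resnest_local_min_attains_aresnest_lower_bound_general (K := fun i => Fin (K i))
    (fun i => W i) (fun i => v i) hu' (by simpa using hMNo) hinj
    (convexOn_empiricalRisk fun n => hconv (y n)) hderiv hp).imp_left IsLeast.isGLB
end

section
/- Suppose Assumption 2 holds (ℓ differentiable and convex in its first argument). Then for any choice of the dense functions Q_1,…,Q_L, every local minimizer (W_0*,…,W_L*) of the DenseNEst empirical risk D satisfies D(W_0*,…,W_L*) ≤ (1/N) Σ_{n=1}^N ℓ(A x^n, y^n) for every matrix A ∈ ℝ^{N_o×N_in}; that is, any local minimum of the DenseNEst empirical risk is smaller than or equal to the minimum empirical risk attainable by any linear predictor of the input. -/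
/-!
STATEMENT 11 (Proposition 4): Under Assumption 2, for any choice of the dense
functions Q_1, …, Q_L, every local minimizer of the DenseNEst empirical risk is at
least as good as the best linear predictor of the input.

The concatenation v_0 © v_1 © ⋯ © v_{i−1} ∈ ℝ^{M_{i−1}} is encoded as the dependent
tuple (v_0, …, v_{i−1}), so a dense function Q_i : ℝ^{M_{i−1}} → ℝ^{D_i} is encoded
as a function of this tuple.
-/

attribute [local instance] Matrix.normedAddCommGroup Matrix.normedSpace

/-!
A convex loss composed with a readout that is linear in its weights gives a convex risk, so local
minimality of the weights is already global minimality. A linear predictor of a single feature block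
is the readout in which the weights of all other blocks are zero, so the minimizer is at least as
good.
-/

theorem convexOn_finset_sum {𝕜 E β ι : Type*} [Semiring 𝕜] [PartialOrder 𝕜] [AddCommMonoid E]
    [SMul 𝕜 E] [AddCommMonoid β] [PartialOrder β] [IsOrderedAddMonoid β] [Module 𝕜 β]
    {s : Set E} (hs : Convex 𝕜 s) {t : Finset ι} {f : ι → E → β}
    (hf : ∀ i ∈ t, ConvexOn 𝕜 s (f i)) : ConvexOn 𝕜 s fun x => ∑ i ∈ t, f i x := by
  classical
  induction t using Finset.induction_on with
  | empty => simpa only [Finset.sum_empty] using convexOn_const 0 hs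
  | insert i t hi ih =>
    simp only [Finset.sum_insert hi]
    exact (hf i (Finset.mem_insert_self i t)).add
      (ih fun j hj => hf j (Finset.mem_insert_of_mem hj))

section WeightedRisk

variable {ι E Y : Type*} [Fintype ι]

/-- The risk `∑ k, c k * ℓ(p k, y k)` of the predictions `p` for the targets `y` under the loss `ℓ`,
sample `k` having weight `c k`. The empirical risk on `N` samples is the case `c k = 1 / N`;
arbitrary weights avoid dividing by the number of samples. -/
def weightedRisk (c : ι → ℝ) (ℓ : E → Y → ℝ) (y : ι → Y) (p : ι → E) : ℝ :=
  ∑ k, c k * ℓ (p k) (y k)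

theorem weightedRisk_const (a : ℝ) (ℓ : E → Y → ℝ) (y : ι → Y) (p : ι → E) :
    weightedRisk (fun _ => a) ℓ y p = a * ∑ k, ℓ (p k) (y k) :=
  (Finset.mul_sum ..).symm

variable [AddCommMonoid E] [Module ℝ E] {c : ι → ℝ} {ℓ : E → Y → ℝ} {y : ι → Y}

theorem convexOn_weightedRisk (hc : ∀ k, 0 ≤ c k)
    (hℓ : ∀ k, ConvexOn ℝ Set.univ fun z => ℓ z (y k)) :
    ConvexOn ℝ Set.univ (weightedRisk c ℓ y) :=
  convexOn_finset_sum convex_univ fun k _ =>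
    ((hℓ k).comp_linearMap (LinearMap.proj (R := ℝ) (φ := fun _ : ι => E) k)).smul (hc k)

theorem weightedRisk_le_of_isLocalMin {P : Type*} [AddCommGroup P] [TopologicalSpace P]
    [IsTopologicalAddGroup P] [Module ℝ P] [ContinuousSMul ℝ P] {f : P →ₗ[ℝ] ι → E} {w : P}
    (hc : ∀ k, 0 ≤ c k) (hℓ : ∀ k, ConvexOn ℝ Set.univ fun z => ℓ z (y k))
    (hw : IsLocalMin (fun u => weightedRisk c ℓ y (f u)) w) (w' : P) :
    weightedRisk c ℓ y (f w) ≤ weightedRisk c ℓ y (f w') :=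
  IsMinOn.of_isLocalMin_of_convex_univ hw ((convexOn_weightedRisk hc hℓ).comp_linearMap f) w'

end WeightedRisk

section BlockReadout

open scoped Matrix

variable {R ι κ m : Type*} {n : κ → Type*} [CommSemiring R] [Fintype κ] [∀ i, Fintype (n i)]

/-- The predictions `∑ i, W i *ᵥ v i k` of a linear readout of the feature blocks `v i` (indexed by
`i : κ`) on the samples `k : ι`, as a linear map of the block weights `W`. -/
def blockReadout (v : (i : κ) → ι → n i → R) :
    ((i : κ) → Matrix m (n i) R) →ₗ[R] ι → m → R where
  toFun W k := ∑ i, W i *ᵥ v i k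
  map_add' W W' := by
    ext1 k
    simp only [Pi.add_apply, Matrix.add_mulVec, Finset.sum_add_distrib]
  map_smul' a W := by
    ext1 k
    simp only [Pi.smul_apply, Matrix.smul_mulVec, Finset.smul_sum, RingHom.id_apply]

theorem blockReadout_apply (v : (i : κ) → ι → n i → R) (W : (i : κ) → Matrix m (n i) R) (k : ι) :
    blockReadout v W k = ∑ i, W i *ᵥ v i k :=
  rfl

theorem blockReadout_single [DecidableEq κ] (v : (i : κ) → ι → n i → R) (i : κ)
    (A : Matrix m (n i) R) : blockReadout v (Pi.single i A) = fun k => A *ᵥ v i k := by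
  ext1 k
  rw [blockReadout_apply, Fintype.sum_eq_single i, Pi.single_eq_same]
  intro j hj
  rw [Pi.single_eq_of_ne hj, Matrix.zero_mulVec]

end BlockReadout

theorem densenest_local_min_beats_linear_predictor_general {ι κ m Y : Type*} {n : κ → Type*}
    [Fintype ι] [Fintype κ] [∀ i, Fintype (n i)]
    {c : ι → ℝ} (hc : ∀ k, 0 ≤ c k) {y : ι → Y} {ℓ : (m → ℝ) → Y → ℝ}
    (hℓ : ∀ k, ConvexOn ℝ Set.univ fun z => ℓ z (y k)) (v : (i : κ) → ι → n i → ℝ)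
    {W : (i : κ) → Matrix m (n i) ℝ}
    (hW : IsLocalMin (fun U => weightedRisk c ℓ y (blockReadout v U)) W)
    (i : κ) (A : Matrix m (n i) ℝ) :
    weightedRisk c ℓ y (blockReadout v W) ≤ weightedRisk c ℓ y fun k => A.mulVec (v i k) := by
  classical
  rw [← blockReadout_single v i A]
  exact weightedRisk_le_of_isLocalMin hc hℓ hW (Pi.single i A)

theorem densenest_local_min_beats_linear_predictor
    (N L No : ℕ) (hN : 0 < N) (hL : 1 ≤ L) (hNo : 0 < No)
    -- growth dimensions D_0 = N_in, D_1, …, D_L ≥ 1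
    (Dd : ℕ → ℕ) (hDd : ∀ i, 1 ≤ Dd i)
    -- inputs x^n ∈ ℝ^{N_in} and targets y^n ∈ ℝ^{N_o}
    (x : Fin N → Fin (Dd 0) → ℝ)
    (y : Fin N → Fin No → ℝ)
    -- dense functions Q_i : ℝ^{M_{i−1}} → ℝ^{D_i} (on concatenations, as tuples)
    (Q : (i : ℕ) → ((j : Fin i) → Fin (Dd j.val) → ℝ) → Fin (Dd i) → ℝ)
    -- DenseNEst features: v_0^n = x^n, v_i^n = Q_i(v_0^n © ⋯ © v_{i−1}^n)
    (v : (i : ℕ) → Fin N → Fin (Dd i) → ℝ)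
    (hv0 : ∀ n, v 0 n = x n)
    (hv : ∀ i n, 1 ≤ i → i ≤ L → v i n = Q i (fun j : Fin i => v j.val n))
    -- the loss function
    (ℓ : (Fin No → ℝ) → (Fin No → ℝ) → ℝ)
    -- Assumption 2: ℓ(yhat, y) is differentiable and convex in yhat for every y
    (hdiff : ∀ yy, Differentiable ℝ (fun yhat => ℓ yhat yy))
    (hconv : ∀ yy, ConvexOn ℝ Set.univ (fun yhat => ℓ yhat yy))
    -- DenseNEst empirical risk
    (D : ((i : Fin (L + 1)) → Matrix (Fin No) (Fin (Dd i.val)) ℝ) → ℝ)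
    (hD : ∀ Wp, D Wp =
      (1 / (N : ℝ)) * ∑ n, ℓ (∑ i : Fin (L + 1), (Wp i).mulVec (v i.val n)) (y n))
    -- a local minimizer of D
    (Wp : (i : Fin (L + 1)) → Matrix (Fin No) (Fin (Dd i.val)) ℝ)
    (hWp : IsLocalMin D Wp) :
    ∀ A : Matrix (Fin No) (Fin (Dd 0)) ℝ,
      D Wp ≤ (1 / (N : ℝ)) * ∑ n, ℓ (A.mulVec (x n)) (y n) := by
  obtain rfl := funext hv0
  obtain rfl : D = fun U => weightedRisk (fun _ => 1 / (N : ℝ)) ℓ y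
      (blockReadout (fun i : Fin (L + 1) => v i) U) :=
    funext fun U => (hD U).trans (weightedRisk_const ..).symm
  exact fun A => (densenest_local_min_beats_linear_predictor_general (fun _ => by positivity)
    (fun k => hconv (y k)) _ hWp 0 A).trans_eq (weightedRisk_const ..)
end

section
/- Given any DenseNEst, i.e., dense functions Q_i : ℝ^{M_{i−1}} → ℝ^{D_i} for i = 1,…,L and an output matrix V ∈ ℝ^{N_o×M_L} defining ŷ_DenseNEst(x) = V (x © Q_1-feature © ⋯ © Q_L-feature), there exist a residual dimension M (one may take M = M_L = N_in + D_1 + ⋯ + D_L), matrices W_0 ∈ ℝ^{M×N_in}, W_i ∈ ℝ^{M×D_i} for i = 1,…,L, functions G_i : ℝ^M → ℝ^{D_i} for i = 1,…,L, and a matrix W_{L+1} ∈ ℝ^{N_o×M} such that (i) the ResNEst defined by x_0 = W_0 x, x_i = x_{i−1} + W_i G_i(x_{i−1}) for i = 1,…,L, and output ŷ_ResNEst(x) = W_{L+1} x_L satisfies ŷ_ResNEst(x) = ŷ_DenseNEst(x) for all x ∈ ℝ^{N_in}, and (ii) the combined linear map (c_0, c_1, …, c_L) ↦ W_0 c_0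 + Σ_{i=1}^L W_i c_i from ℝ^{N_in}×ℝ^{D_1}×⋯×ℝ^{D_L} to ℝ^M is injective (the columns of W_0,…,W_L can be taken mutually orthonormal). -/
/-!
STATEMENT 12 (Proposition 5, first part): Given any DenseNEst, there exists a wide
ResNEst with bottleneck residual blocks computing exactly the same function, whose
weight matrices W_0, …, W_L form an injective combined linear map
(c_0, …, c_L) ↦ Σ_i W_i c_i (one may take M = M_L and mutually orthonormal columns).

The concatenation z_{i−1} = v_0 © ⋯ © v_{i−1} ∈ ℝ^{M_{i−1}} is encoded as the
dependent tuple (v_0, …, v_{i−1}), so a dense function Q_i : ℝ^{M_{i−1}} → ℝ^{D_i}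
is encoded as a function of this tuple, and the DenseNEst output
V z_L = Σ_{i=0}^L V_i v_i is written via the block decomposition V_0, …, V_L of V.
-/

/-!
Give the residual stream one coordinate for each scalar feature, and let `W_i` write the `i`-th
feature block into coordinates of its own. The combined matrix `[W_0 ⋯ W_L]` then has orthonormal
columns, so `W_jᵀ` reads `v_j` back from any state `∑_{l ≤ n} W_l v_l` with `j ≤ n`. A residual
function can therefore decode all earlier features and apply `Q_i` to them, and the output layer
can decode every feature and apply `V`.
-/

section OrthonormalColumns

open scoped Matrix

variable {κ κ' m R : Type*} {ι : κ → Type*} [Semiring R] [Fintype m]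
  [∀ k, DecidableEq (ι k)]

/-- The blocks `W k`, `k ∈ s`, placed side by side form a matrix with orthonormal columns (for the
bilinear dot product). The blocks outside `s` are unconstrained. -/
structure OrthonormalColumnsOn (s : Set κ) (W : (k : κ) → Matrix m (ι k) R) : Prop where
  transpose_mul_self : ∀ k ∈ s, (W k)ᵀ * W k = 1
  transpose_mul_of_ne : s.Pairwise fun k l => (W k)ᵀ * W l = 0

namespace OrthonormalColumnsOn

variable {s : Set κ} {W : (k : κ) → Matrix m (ι k) R}

theorem comp (hW : OrthonormalColumnsOn s W) {f : κ' → κ} {t : Set κ'} (hf : Set.InjOn f t)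
    (hts : Set.MapsTo f t s) : OrthonormalColumnsOn t fun k => W (f k) where
  transpose_mul_self k hk := hW.transpose_mul_self (f k) (hts hk)
  transpose_mul_of_ne _ hk _ hl hkl :=
    hW.transpose_mul_of_ne (hts hk) (hts hl) (hf.ne hk hl hkl)

variable [∀ k, Fintype (ι k)]

theorem transpose_mulVec_sum (hW : OrthonormalColumnsOn s W) {t : Finset κ} (hts : ↑t ⊆ s)
    {k : κ} (hk : k ∈ t) (c : (k : κ) → ι k → R) :
    (W k)ᵀ *ᵥ ∑ l ∈ t, W l *ᵥ c l = c k := by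
  rw [Matrix.mulVec_sum, Finset.sum_eq_single_of_mem k hk, Matrix.mulVec_mulVec,
    hW.transpose_mul_self k (hts hk), Matrix.one_mulVec]
  intro l hl hlk
  rw [Matrix.mulVec_mulVec, hW.transpose_mul_of_ne (hts hk) (hts hl) hlk.symm, Matrix.zero_mulVec]

theorem injective_sum_mulVec [Fintype κ] (hW : OrthonormalColumnsOn Set.univ W) :
    Function.Injective fun c : (k : κ) → ι k → R => ∑ k, W k *ᵥ c k :=
  Function.LeftInverse.injective (g := fun y k => (W k)ᵀ *ᵥ y) fun c => funext fun k =>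
    hW.transpose_mulVec_sum (Set.subset_univ _) (Finset.mem_univ k) c

end OrthonormalColumnsOn

theorem transpose_submatrix_one_mul {n p q : Type*} [DecidableEq n]
    {f : m → n} (hf : Function.Injective f) {g : p → n} (hg : ∀ b, g b ∈ Set.range f)
    (h : q → n) :
    ((1 : Matrix n n R).submatrix f g)ᵀ * (1 : Matrix n n R).submatrix f h =
      (1 : Matrix n n R).submatrix g h := by
  ext b c
  obtain ⟨a, ha⟩ := hg b
  simp only [Matrix.mul_apply, Matrix.transpose_apply, Matrix.submatrix_apply]
  rw [← ha, Finset.sum_eq_single_of_mem a (Finset.mem_univ a), Matrix.one_apply_eq, one_mul]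
  intro a' _ ha'
  rw [Matrix.one_apply_ne (hf.ne ha'), zero_mul]

variable [DecidableEq κ]

/-- The matrix writing the block `k` into a vector whose coordinate `a` holds the scalar labelled
`f a`. Blocks whose labels do not occur are sent to `0`. -/
def blockInclusion (R : Type*) [Semiring R] (f : m → (k : κ) × ι k) (k : κ) : Matrix m (ι k) R :=
  (1 : Matrix ((k : κ) × ι k) ((k : κ) × ι k) R).submatrix f (Sigma.mk k)

theorem orthonormalColumnsOn_blockInclusion {f : m → (k : κ) × ι k} (hf : Function.Injective f)
    {s : Set κ} (hs : Sigma.fst ⁻¹' s ⊆ Set.range f) :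
    OrthonormalColumnsOn s (blockInclusion R f) := by
  have gram (k : κ) (hk : k ∈ s) (l : κ) :
      (blockInclusion R f k)ᵀ * blockInclusion R f l =
        (1 : Matrix ((k : κ) × ι k) ((k : κ) × ι k) R).submatrix (Sigma.mk k) (Sigma.mk l) :=
    transpose_submatrix_one_mul hf (fun _ => hs hk) _
  refine ⟨fun k hk => ?_, fun k hk l _ hkl => ?_⟩
  · rw [gram k hk, Matrix.submatrix_one _ sigma_mk_injective]
  · ext i j
    simp [gram k hk, hkl]

end OrthonormalColumns

section DenseToResidual

open scoped Matrix

variable {m o R : Type*} {ι : ℕ → Type*} [Semiring R]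

theorem exists_orthonormalColumnsOn_Iic [Fintype m] [∀ i, DecidableEq (ι i)] {L : ℕ}
    (e : m ≃ (i : Fin (L + 1)) × ι i) :
    ∃ W : (i : ℕ) → Matrix m (ι i) R, OrthonormalColumnsOn (Set.Iic L) W := by
  let label : (i : Fin (L + 1)) × ι i → (i : ℕ) × ι i := Sigma.map Fin.val fun _ => id
  have label_injective : Function.Injective label :=
    Fin.val_injective.sigma_map fun _ => Function.injective_id
  refine ⟨_, orthonormalColumnsOn_blockInclusion (label_injective.comp e.injective) ?_⟩
  rintro ⟨i, k⟩ hi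
  exact ⟨e.symm ⟨⟨i, Nat.lt_succ_of_le hi⟩, k⟩, congrArg label (e.apply_symm_apply _)⟩

variable [∀ i, Fintype (ι i)]

/-- The ResNEst hidden state `x_n` carrying the dense features `v_0, …, v_n`. -/
def residualState (W : (i : ℕ) → Matrix m (ι i) R) (v : (i : ℕ) → ι i → R) (n : ℕ) : m → R :=
  ∑ j ∈ Finset.range (n + 1), W j *ᵥ v j

/-- The ResNEst residual function `G_i`: decode the features `v_0, …, v_{i-1}` from the hidden
state by the transposed weights and apply the dense function `Q_i` to them. -/
def residualFunction [Fintype m] (W : (i : ℕ) → Matrix m (ι i) R)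
    (Q : (i : ℕ) → ((j : Fin i) → ι j → R) → ι i → R) (i : ℕ) (y : m → R) : ι i → R :=
  Q i fun j => (W j)ᵀ *ᵥ y

/-- The ResNEst output matrix `W_{L+1}`: decode all features and apply the dense output blocks. -/
def residualOutput (W : (i : ℕ) → Matrix m (ι i) R) (V : (i : ℕ) → Matrix o (ι i) R) (L : ℕ) :
    Matrix o m R :=
  ∑ i ∈ Finset.range (L + 1), V i * (W i)ᵀ

theorem residualState_zero (W : (i : ℕ) → Matrix m (ι i) R) (v : (i : ℕ) → ι i → R) :
    residualState W v 0 = W 0 *ᵥ v 0 := by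
  simp [residualState]

theorem residualState_succ (W : (i : ℕ) → Matrix m (ι i) R) (v : (i : ℕ) → ι i → R) (n : ℕ) :
    residualState W v (n + 1) = residualState W v n + W (n + 1) *ᵥ v (n + 1) :=
  Finset.sum_range_succ _ _

namespace OrthonormalColumnsOn

variable [Fintype m] [∀ i, DecidableEq (ι i)] {L : ℕ} {W : (i : ℕ) → Matrix m (ι i) R}

theorem transpose_mulVec_residualState (hW : OrthonormalColumnsOn (Set.Iic L) W)
    (v : (i : ℕ) → ι i → R) {j n : ℕ} (hjn : j ≤ n) (hnL : n ≤ L) :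
    (W j)ᵀ *ᵥ residualState W v n = v j :=
  hW.transpose_mulVec_sum
    (fun _ hl => (Nat.lt_succ_iff.mp (Finset.mem_range.mp hl)).trans hnL)
    (Finset.mem_range_succ_iff.mpr hjn) v

theorem residualFunction_residualState (hW : OrthonormalColumnsOn (Set.Iic L) W)
    (Q : (i : ℕ) → ((j : Fin i) → ι j → R) → ι i → R) (v : (i : ℕ) → ι i → R) {n : ℕ}
    (hnL : n ≤ L) :
    residualFunction W Q (n + 1) (residualState W v n) = Q (n + 1) fun j => v j :=
  congrArg (Q (n + 1)) <| funext fun j =>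
    hW.transpose_mulVec_residualState v (Nat.lt_succ_iff.mp j.isLt) hnL

theorem residualOutput_mulVec_residualState (hW : OrthonormalColumnsOn (Set.Iic L) W)
    (V : (i : ℕ) → Matrix o (ι i) R) (v : (i : ℕ) → ι i → R) :
    residualOutput W V L *ᵥ residualState W v L = ∑ i ∈ Finset.range (L + 1), V i *ᵥ v i := by
  rw [residualOutput, Matrix.sum_mulVec]
  refine Finset.sum_congr rfl fun i hi => ?_
  rw [← Matrix.mulVec_mulVec,
    hW.transpose_mulVec_residualState v (Finset.mem_range_succ_iff.mp hi) le_rfl]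

end OrthonormalColumnsOn

theorem densenest_is_wide_bottleneck_resnest_general [Fintype m] [∀ i, DecidableEq (ι i)]
    (L : ℕ) (e : m ≃ (i : Fin (L + 1)) × ι i)
    (Q : (i : ℕ) → ((j : Fin i) → ι j → R) → ι i → R) (V : (i : ℕ) → Matrix o (ι i) R)
    (v : (i : ℕ) → (ι 0 → R) → ι i → R) (hv0 : ∀ x, v 0 x = x)
    (hv : ∀ i x, 1 ≤ i → i ≤ L → v i x = Q i fun j => v j x) :
    ∃ (W : (i : ℕ) → Matrix m (ι i) R) (G : (i : ℕ) → (m → R) → ι i → R)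
      (WL1 : Matrix o m R) (X : ℕ → (ι 0 → R) → m → R),
      (∀ x, X 0 x = W 0 *ᵥ x) ∧
      (∀ i x, 1 ≤ i → i ≤ L → X i x = X (i - 1) x + W i *ᵥ G i (X (i - 1) x)) ∧
      (∀ x, WL1 *ᵥ X L x = ∑ i ∈ Finset.range (L + 1), V i *ᵥ v i x) ∧
      OrthonormalColumnsOn (Set.Iic L) W := by
  obtain ⟨W, hW⟩ := exists_orthonormalColumnsOn_Iic (R := R) e
  refine ⟨W, residualFunction W Q, residualOutput W V L,
    fun n x => residualState W (fun i => v i x) n, fun x => ?_, fun i x hi hiL => ?_,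
    fun x => hW.residualOutput_mulVec_residualState V _, hW⟩
  · exact (residualState_zero W _).trans (congrArg _ (hv0 x))
  · obtain ⟨n, rfl⟩ := Nat.exists_eq_add_of_le' hi
    simp only [Nat.add_sub_cancel]
    rw [residualState_succ, hv _ x hi hiL,
      hW.residualFunction_residualState Q _ (Nat.le_of_succ_le hiL)]

end DenseToResidual

theorem densenest_is_wide_bottleneck_resnest
    (L No : ℕ) (hL : 1 ≤ L) (hNo : 0 < No)
    -- growth dimensions D_0 = N_in, D_1, …, D_L ≥ 1
    (Dd : ℕ → ℕ) (hDd : ∀ i, 1 ≤ Dd i)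
    -- dense functions Q_i : ℝ^{M_{i−1}} → ℝ^{D_i} (on concatenations, as tuples)
    (Q : (i : ℕ) → ((j : Fin i) → Fin (Dd j.val) → ℝ) → Fin (Dd i) → ℝ)
    -- output matrix V ∈ ℝ^{N_o×M_L}, in block form V_0, …, V_L
    (V : (i : ℕ) → Matrix (Fin No) (Fin (Dd i)) ℝ)
    -- DenseNEst features of an input x: v_0(x) = x, v_i(x) = Q_i(v_0 © ⋯ © v_{i−1})
    (v : (i : ℕ) → (Fin (Dd 0) → ℝ) → Fin (Dd i) → ℝ)
    (hv0 : ∀ x, v 0 x = x)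
    (hv : ∀ i x, 1 ≤ i → i ≤ L → v i x = Q i (fun j : Fin i => v j.val x)) :
    -- there is an equivalent ResNEst: residual dimension M, weights W_i, residual
    -- functions G_i, output matrix W_{L+1}, and hidden states X_i with
    -- X_0 = W_0 x, X_i = X_{i−1} + W_i G_i(X_{i−1}), W_{L+1} X_L = DenseNEst output
    ∃ (M : ℕ) (W : (i : ℕ) → Matrix (Fin M) (Fin (Dd i)) ℝ)
      (G : (i : ℕ) → (Fin M → ℝ) → Fin (Dd i) → ℝ)
      (WL1 : Matrix (Fin No) (Fin M) ℝ)
      (X : ℕ → (Fin (Dd 0) → ℝ) → Fin M → ℝ),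
      (∀ x, X 0 x = (W 0).mulVec x) ∧
      (∀ i x, 1 ≤ i → i ≤ L →
        X i x = X (i - 1) x + (W i).mulVec (G i (X (i - 1) x))) ∧
      (∀ x, WL1.mulVec (X L x) =
        ∑ i ∈ Finset.range (L + 1), (V i).mulVec (v i x)) ∧
      Function.Injective
        (fun c : (i : Fin (L + 1)) → Fin (Dd i.val) → ℝ =>
          ∑ i : Fin (L + 1), (W i.val).mulVec (c i)) := by
  obtain ⟨W, G, WL1, X, hX0, hX, hout, hW⟩ :=
    densenest_is_wide_bottleneck_resnest_general (ι := fun i => Fin (Dd i)) L finSigmaFinEquiv.symm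
      Q V v hv0 hv
  have hW' : OrthonormalColumnsOn Set.univ fun i : Fin (L + 1) => W i :=
    hW.comp Fin.val_injective.injOn fun i _ => Nat.lt_succ_iff.mp i.isLt
  exact ⟨_, W, G, WL1, X, hX0, hX, hout, hW'.injective_sum_mulVec⟩
end
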